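/- Let m ≥ 1 be an integer and set p = max{3m, m+4}. Then every graph in P(p) is {K_{1,3}, B_{1,m}}-free and contains P_p as an induced subgraph. -/

import Mathlib

open SimpleGraph

def graphOfList (n : ℕ) (E : List (Fin n × Fin n)) : SimpleGraph (Fin n) :=
  SimpleGraph.fromRel (fun a b => (a, b) ∈ E)

/-- The claw `K_{1,3}`, with center `0`. -/
def K13 : SimpleGraph (Fin 4) := graphOfList 4 [(0,1), (0,2), (0,3)]

/-- `B_{1,m} = N_{1,m,0}`: a triangle `0,1,2`, a pendant vertex `3` attached to `0`,
and a path `4,5,…,m+3` of length `m` attached at the vertex `1`. -/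
def Bgraph (m : ℕ) : SimpleGraph (Fin (m + 4)) :=
  SimpleGraph.fromRel (fun a b =>
    (a.val = 0 ∧ b.val = 1) ∨ (a.val = 0 ∧ b.val = 2) ∨ (a.val = 1 ∧ b.val = 2) ∨
    (a.val = 0 ∧ b.val = 3) ∨ (a.val = 1 ∧ b.val = 4) ∨
    (4 ≤ a.val ∧ b.val = a.val + 1))

/-- `G` contains `H` as an induced subgraph. -/
def ContainsInduced {V W : Type*} (G : SimpleGraph V) (H : SimpleGraph W) : Prop :=
  Nonempty (H ↪g G)

/-- The cliques `L 0, …, L (l-1)` form an (induced) fat `l`-path decomposition: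
they are nonempty, pairwise disjoint, and two distinct vertices lying in them are adjacent
iff they lie in the same clique or in consecutive cliques. -/
def IsFatPathDecomp {V : Type*} (G : SimpleGraph V) (l : ℕ) (L : Fin l → Set V) : Prop :=
  (∀ i, (L i).Nonempty) ∧
  (∀ i j, i ≠ j → Disjoint (L i) (L j)) ∧
  (∀ (i j : Fin l) (u v : V), u ∈ L i → v ∈ L j → u ≠ v →
    (G.Adj u v ↔ i = j ∨ (i : ℕ) + 1 = (j : ℕ) ∨ (j : ℕ) + 1 = (i : ℕ)))

/-- The cliques `L 0, …, L l` form an (induced) fat `l`-cycle decomposition: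
they are nonempty, pairwise disjoint, and two distinct vertices lying in them are adjacent
iff they lie in the same clique or in (cyclically) consecutive cliques. -/
def IsFatCycleDecomp {V : Type*} (G : SimpleGraph V) (l : ℕ) (L : Fin (l + 1) → Set V) : Prop :=
  (∀ i, (L i).Nonempty) ∧
  (∀ i j, i ≠ j → Disjoint (L i) (L j)) ∧
  (∀ (i j : Fin (l + 1)) (u v : V), u ∈ L i → v ∈ L j → u ≠ v →
    (G.Adj u v ↔ i = j ∨ ((i : ℕ) + 1) % (l + 1) = (j : ℕ) ∨ ((j : ℕ) + 1) % (l + 1) = (i : ℕ)))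

/-- `G` is a fat `l`-path (so `l ≥ 5` and the fundamental cliques cover `G`). -/
def IsFatPath {V : Type*} (G : SimpleGraph V) (l : ℕ) : Prop :=
  5 ≤ l ∧ ∃ L : Fin l → Set V, IsFatPathDecomp G l L ∧ ∀ v : V, ∃ i, v ∈ L i

/-- `G` is a fat `l`-cycle (so `l ≥ 5` and the `l+1` fundamental cliques cover `G`). -/
def IsFatCycle {V : Type*} (G : SimpleGraph V) (l : ℕ) : Prop :=
  5 ≤ l ∧ ∃ L : Fin (l + 1) → Set V, IsFatCycleDecomp G l L ∧ ∀ v : V, ∃ i, v ∈ L i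

/-- `G` belongs to the family `𝒫(p)` of all fat `i`-paths and fat `i`-cycles with `i ≥ p`. -/
def MemFatFamily {V : Type*} (G : SimpleGraph V) (p : ℕ) : Prop :=
  ∃ l, p ≤ l ∧ (IsFatPath G l ∨ IsFatCycle G l)

/-!
A fat path or cycle is a blow-up of a path or cycle `H`: each vertex is replaced by a clique. Two
vertices in the same clique have the same closed neighbourhood, so an induced subgraph `F` without
true twins meets every clique at most once and is therefore already an induced subgraph of `H`.
This rules out every such `F` with a vertex of degree at least `3`; the claw and the bull `B_{1,1}`,
which is an induced subgraph of `B_{1,m}`, are of this kind. Conversely, choosing one vertex in each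
clique embeds `H`, hence `P_p`, into the blow-up.
-/

/-- The clique blow-up of `H` along `π`: every vertex of `H` is replaced by the clique on its
fibre under `π`, and cliques over adjacent vertices are joined completely. Fat paths and fat cycles
are the blow-ups of paths and cycles along surjections. -/
def cliqueBlowup {V W : Type*} (H : SimpleGraph W) (π : V → W) : SimpleGraph V where
  Adj u v := u ≠ v ∧ (π u = π v ∨ H.Adj (π u) (π v))
  symm := ⟨fun _ _ ⟨hne, h⟩ => ⟨hne.symm, h.imp Eq.symm Adj.symm⟩⟩
  loopless := ⟨fun _ h => h.1 rfl⟩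

/-- A graph without true twins: distinct vertices have distinct closed neighbourhoods
(expressed elementwise, which makes it decidable on finite graphs). -/
def TrueTwinFree {V : Type*} (G : SimpleGraph V) : Prop :=
  ∀ u v, (∀ w, w = u ∨ G.Adj u w ↔ w = v ∨ G.Adj v w) → u = v

section CliqueBlowup

variable {U V W : Type*} {F : SimpleGraph U} {G : SimpleGraph V} {H : SimpleGraph W} {π : V → W}

theorem cliqueBlowup_adj_of_apply_ne {u v : V} (h : π u ≠ π v) :
    (cliqueBlowup H π).Adj u v ↔ H.Adj (π u) (π v) :=
  ⟨fun huv => huv.2.resolve_left h, fun huv => ⟨ne_of_apply_ne π h, Or.inr huv⟩⟩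

theorem isIndContained_cliqueBlowup (hπ : Function.Surjective π) : H ⊴ cliqueBlowup H π := by
  obtain ⟨σ, hσ⟩ := hπ.hasRightInverse
  refine ⟨⟨⟨σ, hσ.injective⟩, fun {a b} => ?_⟩⟩
  rcases eq_or_ne a b with rfl | hab
  · simp only [SimpleGraph.irrefl]
  · have hπσ : π (σ a) ≠ π (σ b) := by rwa [hσ a, hσ b]
    simpa only [Function.Embedding.coeFn_mk, hσ a, hσ b] using cliqueBlowup_adj_of_apply_ne hπσ

theorem closedNeighbor_cliqueBlowup_iff {u w : V} :
    w = u ∨ (cliqueBlowup H π).Adj u w ↔ π u = π w ∨ H.Adj (π u) (π w) := by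
  rcases eq_or_ne w u with rfl | hwu
  · simp only [true_or]
  · exact ⟨fun h => (h.resolve_left hwu).2, fun h => Or.inr ⟨hwu.symm, h⟩⟩

theorem TrueTwinFree.isIndContained_of_cliqueBlowup (hF : TrueTwinFree F)
    (h : F ⊴ cliqueBlowup H π) : F ⊴ H := by
  obtain ⟨f⟩ := h
  have closedNeighbor_iff (a c : U) :
      c = a ∨ F.Adj a c ↔ π (f a) = π (f c) ∨ H.Adj (π (f a)) (π (f c)) := by
    rw [← closedNeighbor_cliqueBlowup_iff, f.map_adj_iff, f.injective.eq_iff]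
  have hinj : Function.Injective (π ∘ f) := fun a b (hab : π (f a) = π (f b)) =>
    hF a b fun c => by rw [closedNeighbor_iff, closedNeighbor_iff, hab]
  refine ⟨⟨⟨π ∘ f, hinj⟩, fun {a b} => ?_⟩⟩
  rcases eq_or_ne a b with rfl | hab
  · simp only [SimpleGraph.irrefl]
  · exact (cliqueBlowup_adj_of_apply_ne (π := π) (hinj.ne hab)).symm.trans f.map_adj_iff

theorem exists_eq_cliqueBlowup_of_cliques {L : W → Set V} (hne : ∀ i, (L i).Nonempty)
    (hdisj : ∀ i j, i ≠ j → Disjoint (L i) (L j)) (hcov : ∀ v, ∃ i, v ∈ L i)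
    (hadj : ∀ i j u v, u ∈ L i → v ∈ L j → u ≠ v → (G.Adj u v ↔ i = j ∨ H.Adj i j)) :
    ∃ π : V → W, Function.Surjective π ∧ G = cliqueBlowup H π := by
  choose π hπ using hcov
  refine ⟨π, fun i => ?_, ?_⟩
  · obtain ⟨v, hv⟩ := hne i
    exact ⟨v, by_contra fun h => Set.disjoint_left.1 (hdisj _ _ h) (hπ v) hv⟩
  · ext u v
    exact ⟨fun h => ⟨h.ne, (hadj _ _ u v (hπ u) (hπ v) h.ne).1 h⟩,
      fun h => (hadj _ _ u v (hπ u) (hπ v) h.1).2 h.2⟩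

end CliqueBlowup

section PathsAndCycles

theorem cycleGraph_adj_iff_mod {n : ℕ} {i j : Fin n} (hij : i ≠ j) :
    (cycleGraph n).Adj i j ↔ ((i : ℕ) + 1) % n = j ∨ ((j : ℕ) + 1) % n = i := by
  match n with
  | 0 => exact i.elim0
  | 1 => exact absurd (Subsingleton.elim i j) hij
  | n + 2 =>
    simp only [cycleGraph_adj, sub_eq_iff_eq_add', Fin.ext_iff, Fin.val_add, Fin.val_one,
      eq_comm, or_comm]

theorem pathGraph_isIndContained_pathGraph {p n : ℕ} (h : p ≤ n) : pathGraph p ⊴ pathGraph n :=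
  ⟨⟨Fin.castLEEmb h, by simp [pathGraph_adj]⟩⟩

theorem pathGraph_isIndContained_cycleGraph {p n : ℕ} (h : p < n) :
    pathGraph p ⊴ cycleGraph n := by
  refine ⟨⟨Fin.castLEEmb h.le, fun {a b} => ?_⟩⟩
  rcases eq_or_ne a b with rfl | hab
  · simp only [SimpleGraph.irrefl]
  · have succ_mod (c : Fin p) : ((c : ℕ) + 1) % n = c + 1 := Nat.mod_eq_of_lt (by lia)
    rw [cycleGraph_adj_iff_mod ((Fin.castLEEmb h.le).injective.ne hab), pathGraph_adj]
    simp only [Fin.castLEEmb_apply, Fin.val_castLE, succ_mod]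

theorem degree_le_two_of_isContained_cycleGraph {V : Type*} {F : SimpleGraph V} {n : ℕ}
    (h : F ⊑ cycleGraph n) (v : V) [Fintype (F.neighborSet v)] : F.degree v ≤ 2 := by
  obtain ⟨f⟩ := h
  have degree_le (w : Fin n) : (cycleGraph n).degree w ≤ 2 := by
    match n with
    | 0 => exact w.elim0
    | 1 => exact ((cycleGraph 1).degree_lt_card_verts w).le.trans (by simp)
    | n + 2 => exact cycleGraph_degree_two_le.trans_le Finset.card_le_two
  exact (f.degree_le v).trans (degree_le (f v))

end PathsAndCycles

section FatFamily

variable {V : Type*} {G : SimpleGraph V} {l p : ℕ}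

theorem IsFatPath.exists_eq_cliqueBlowup (h : IsFatPath G l) :
    ∃ π : V → Fin l, Function.Surjective π ∧ G = cliqueBlowup (pathGraph l) π := by
  obtain ⟨-, L, ⟨hne, hdisj, hadj⟩, hcov⟩ := h
  refine exists_eq_cliqueBlowup_of_cliques hne hdisj hcov fun i j u v hu hv huv => ?_
  rw [hadj i j u v hu hv huv, pathGraph_adj]

theorem IsFatCycle.exists_eq_cliqueBlowup (h : IsFatCycle G l) :
    ∃ π : V → Fin (l + 1), Function.Surjective π ∧ G = cliqueBlowup (cycleGraph (l + 1)) π := by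
  obtain ⟨-, L, ⟨hne, hdisj, hadj⟩, hcov⟩ := h
  refine exists_eq_cliqueBlowup_of_cliques hne hdisj hcov fun i j u v hu hv huv => ?_
  rw [hadj i j u v hu hv huv]
  exact or_congr_right' fun hij => (cycleGraph_adj_iff_mod hij).symm

theorem MemFatFamily.exists_eq_cliqueBlowup (h : MemFatFamily G p) :
    ∃ (n : ℕ) (H : SimpleGraph (Fin n)) (π : V → Fin n), H ≤ cycleGraph n ∧ pathGraph p ⊴ H ∧
      Function.Surjective π ∧ G = cliqueBlowup H π := by
  obtain ⟨l, hpl, hG | hG⟩ := h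
  · obtain ⟨π, hπ, hG⟩ := hG.exists_eq_cliqueBlowup
    exact ⟨l, _, π, pathGraph_le_cycleGraph, pathGraph_isIndContained_pathGraph hpl, hπ, hG⟩
  · obtain ⟨π, hπ, hG⟩ := hG.exists_eq_cliqueBlowup
    exact ⟨l + 1, _, π, le_rfl, pathGraph_isIndContained_cycleGraph (Nat.lt_succ_of_le hpl), hπ, hG⟩

theorem MemFatFamily.pathGraph_isIndContained (h : MemFatFamily G p) : pathGraph p ⊴ G := by
  obtain ⟨n, H, π, -, hpath, hπ, rfl⟩ := h.exists_eq_cliqueBlowup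
  exact hpath.trans (isIndContained_cliqueBlowup hπ)

theorem MemFatFamily.not_isIndContained_of_two_lt_degree {U : Type*} {F : SimpleGraph U}
    (h : MemFatFamily G p) (hF : TrueTwinFree F) {u : U} [Fintype (F.neighborSet u)]
    (hu : 2 < F.degree u) : ¬ F ⊴ G := by
  obtain ⟨n, H, π, hH, -, -, rfl⟩ := h.exists_eq_cliqueBlowup
  intro hFG
  have hFC : F ⊑ cycleGraph n :=
    (hF.isIndContained_of_cliqueBlowup hFG).isContained.trans (IsContained.of_le hH)
  exact hu.not_ge (degree_le_two_of_isContained_cycleGraph hFC u)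

end FatFamily

section ForbiddenGraphs

variable {V : Type*} {G : SimpleGraph V} {p : ℕ}

instance : DecidableRel K13.Adj :=
  inferInstanceAs (DecidableRel (SimpleGraph.fromRel _).Adj)

instance (m : ℕ) : DecidableRel (Bgraph m).Adj :=
  inferInstanceAs (DecidableRel (SimpleGraph.fromRel _).Adj)

theorem trueTwinFree_k13 : TrueTwinFree K13 := by
  unfold TrueTwinFree; decide

theorem trueTwinFree_bgraph_one : TrueTwinFree (Bgraph 1) := by
  unfold TrueTwinFree; decide

theorem bgraph_isIndContained_bgraph {k m : ℕ} (h : k ≤ m) : Bgraph k ⊴ Bgraph m :=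
  ⟨⟨Fin.castLEEmb (Nat.add_le_add_right h 4), by
    simp only [Bgraph, fromRel_adj, Fin.castLEEmb_apply, Fin.val_castLE, ne_eq, Fin.castLE_inj,
      implies_true]⟩⟩

theorem MemFatFamily.not_k13_isIndContained (h : MemFatFamily G p) : ¬ K13 ⊴ G :=
  h.not_isIndContained_of_two_lt_degree trueTwinFree_k13 (u := 0) (by decide)

theorem MemFatFamily.not_bgraph_isIndContained {m : ℕ} (h : MemFatFamily G p) (hm : 1 ≤ m) :
    ¬ Bgraph m ⊴ G := fun hB =>
  have bull_free : ¬ Bgraph 1 ⊴ G :=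
    h.not_isIndContained_of_two_lt_degree trueTwinFree_bgraph_one (u := 0) (by decide)
  bull_free ((bgraph_isIndContained_bgraph hm).trans hB)

end ForbiddenGraphs

theorem stmt19_general {V : Type*} {p m : ℕ} (hm : 1 ≤ m) {G : SimpleGraph V}
    (hG : MemFatFamily G p) :
    ¬ ContainsInduced G K13 ∧ ¬ ContainsInduced G (Bgraph m) ∧
      ContainsInduced G (SimpleGraph.pathGraph p) :=
  ⟨hG.not_k13_isIndContained, hG.not_bgraph_isIndContained hm, hG.pathGraph_isIndContained⟩

/-- **(Statement 19.)** Let `m ≥ 1` and `p = max{3m, m+4}`.  Every graph in `𝒫(p)` is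
`{K_{1,3}, B_{1,m}}`-free and contains `P_p` as an induced subgraph. -/
theorem stmt19 {V : Type*} [Fintype V] (m : ℕ) (hm : 1 ≤ m) (G : SimpleGraph V)
    (hG : MemFatFamily G (max (3 * m) (m + 4))) :
    ¬ ContainsInduced G K13 ∧ ¬ ContainsInduced G (Bgraph m) ∧
      ContainsInduced G (SimpleGraph.pathGraph (max (3 * m) (m + 4))) :=
  stmt19_general hm hG
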